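/- arXiv:2304.14858 — 2 statements merged into one kernel-verified Lean document; each statement's English description precedes it below -/
import Mathlib

section
/- Let (X, d) be a metric space and μ a Borel measure on X satisfying the doubling condition with constant C_D ≥ 1 and Q = log₂ C_D. Let 0 < α ≤ 1 and let a : X → [0, ∞) satisfy [a]_α < ∞. Then for every ball B_ρ(z) ⊆ X and all x, y ∈ B_ρ(z), one has |a(x) − a(y)| ≤ [a]_α · (2 · C_D² · μ(B_ρ(z)))^{α/Q}. -/
open MeasureTheory Metric

/- The quasi-distance `δ_μ(x,y) = (μ(B_{d(x,y)}(x)) + μ(B_{d(x,y)}(y)))^{1/Q}`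
for `x ≠ y`, and `δ_μ(x,x) = 0`. -/
open Classical in
noncomputable def deltaDist {X : Type*} [MetricSpace X] [MeasurableSpace X]
    (μ : MeasureTheory.Measure X) (Q : ℝ) (x y : X) : ℝ :=
  if x = y then 0
  else ((μ (Metric.ball x (dist x y)) + μ (Metric.ball y (dist x y))).toReal) ^ (1 / Q)

/-- If `μ` is doubling with constant `C_D ≥ 1`, `Q = log₂ C_D`, and
`a : X → [0,∞)` is `α`-Hölder continuous with respect to `δ_μ` with seminorm `[a]_α = A`,
then for any ball `B_ρ(z)` and `x, y ∈ B_ρ(z)` we have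
`|a(x) - a(y)| ≤ [a]_α (2 C_D² μ(B_ρ(z)))^{α/Q}`. -/
theorem stmt2 {X : Type*} [MetricSpace X] [MeasurableSpace X] [BorelSpace X]
    (μ : Measure X) (C_D : ℝ) (hCD : 1 ≤ C_D)
    (hD : ∀ (x : X) (r : ℝ), 0 < r →
      0 < μ (ball x r) ∧ μ (ball x (2 * r)) ≤ ENNReal.ofReal C_D * μ (ball x r) ∧
        μ (ball x r) < ⊤)
    (Q : ℝ) (hQ : Q = Real.logb 2 C_D)
    (α : ℝ) (hα0 : 0 < α) (hα1 : α ≤ 1)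
    (a : X → ℝ) (ha : ∀ x, 0 ≤ a x)
    (A : ℝ) (hA : 0 ≤ A)
    (hHolder : ∀ x y : X, x ≠ y → |a x - a y| ≤ A * deltaDist μ Q x y ^ α) :
    ∀ (z : X) (ρ : ℝ) (x y : X), x ∈ ball z ρ → y ∈ ball z ρ →
      |a x - a y| ≤ A * (2 * C_D ^ 2 * (μ (ball z ρ)).toReal) ^ (α / Q) := by
  intro z ρ x y hx hy
  have hρ : 0 < ρ := pos_of_mem_ball hx
  have hR : 0 ≤ 2 * C_D ^ 2 * (μ (ball z ρ)).toReal := by positivity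
  by_cases hxy : x = y
  · subst hxy
    simp only [sub_self, abs_zero]
    exact mul_nonneg hA (Real.rpow_nonneg hR _)
  have hQ0 : 0 ≤ Q := by
    rw [hQ]
    exact Real.logb_nonneg (by norm_num) hCD
  refine (hHolder x y hxy).trans (mul_le_mul_of_nonneg_left ?_ hA)
  rw [deltaDist, if_neg hxy, ← Real.rpow_mul ENNReal.toReal_nonneg]
  have he : 1 / Q * α = α / Q := by ring
  rw [he]
  refine Real.rpow_le_rpow ENNReal.toReal_nonneg ?_ (by positivity)
  have h4 : μ (ball z (2 * (2 * ρ))) ≤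
      ENNReal.ofReal C_D * (ENNReal.ofReal C_D * μ (ball z ρ)) :=
    (hD z (2 * ρ) (by positivity)).2.1.trans (by gcongr; exact (hD z ρ hρ).2.1)
  rw [mem_ball] at hx hy
  have hd : dist x y < 2 * ρ := by
    have := dist_triangle_right x y z
    linarith
  have h1 : μ (ball x (dist x y)) ≤ μ (ball z (2 * (2 * ρ))) :=
    measure_mono (ball_subset_ball' (by linarith))
  have h2 : μ (ball y (dist x y)) ≤ μ (ball z (2 * (2 * ρ))) :=
    measure_mono (ball_subset_ball' (by linarith))
  have hfin := (hD z ρ hρ).2.2.ne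
  have h5 := add_le_add (h1.trans h4) (h2.trans h4)
  have h6 := ENNReal.toReal_mono (by finiteness) h5
  refine h6.trans (le_of_eq ?_)
  rw [ENNReal.toReal_add (by finiteness) (by finiteness)]
  simp only [ENNReal.toReal_mul, ENNReal.toReal_ofReal (zero_le_one.trans hCD)]
  ring
end

section
/- Let (X, d) be a metric space and μ a Borel measure on X satisfying the doubling condition with constant C_D ≥ 1 and Q = log₂ C_D. Let 0 < α ≤ 1 and let a : X → [0, ∞) satisfy [a]_α < ∞. Let B_ρ(z) ⊆ X be a ball and set a₀ = inf_{x ∈ B_ρ(z)} a(x). If a₀ > 2 · [a]_α · (2 · C_D² · μ(B_ρ(z)))^{α/Q}, then a₀ ≤ a(x) ≤ 2a₀ for every x ∈ B_ρ(z). -/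
open MeasureTheory Metric

/-- If `μ` is doubling with constant `C_D ≥ 1`, `Q = log₂ C_D`,
`a : X → [0,∞)` is `α`-Hölder continuous with respect to `δ_μ` with seminorm `[a]_α = A`,
and `a₀ = inf_{B_ρ(z)} a` satisfies `a₀ > 2 [a]_α (2 C_D² μ(B_ρ(z)))^{α/Q}`, then
`a₀ ≤ a(x) ≤ 2 a₀` for every `x ∈ B_ρ(z)`. -/
theorem stmt3 {X : Type*} [MetricSpace X] [MeasurableSpace X] [BorelSpace X]
    (μ : Measure X) (C_D : ℝ) (hCD : 1 ≤ C_D)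
    (hD : ∀ (x : X) (r : ℝ), 0 < r →
      0 < μ (ball x r) ∧ μ (ball x (2 * r)) ≤ ENNReal.ofReal C_D * μ (ball x r) ∧
        μ (ball x r) < ⊤)
    (Q : ℝ) (hQ : Q = Real.logb 2 C_D)
    (α : ℝ) (hα0 : 0 < α) (hα1 : α ≤ 1)
    (a : X → ℝ) (ha : ∀ x, 0 ≤ a x)
    (A : ℝ) (hA : 0 ≤ A)
    (hHolder : ∀ x y : X, x ≠ y → |a x - a y| ≤ A * deltaDist μ Q x y ^ α)
    (z : X) (ρ : ℝ) (a₀ : ℝ) (ha₀ : a₀ = sInf (a '' ball z ρ))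
    (hbig : a₀ > 2 * A * (2 * C_D ^ 2 * (μ (ball z ρ)).toReal) ^ (α / Q)) :
    ∀ x ∈ ball z ρ, a₀ ≤ a x ∧ a x ≤ 2 * a₀ := by
  intro x hx
  have hρ : 0 < ρ := lt_of_le_of_lt dist_nonneg (mem_ball.1 hx)
  have hQ0 : 0 ≤ Q := by
    rw [hQ]; exact Real.logb_nonneg (by norm_num) hCD
  have hC0 : 0 ≤ C_D := by linarith
  set m := (μ (ball z ρ)).toReal with hm
  have hm0 : 0 ≤ m := ENNReal.toReal_nonneg
  set K := (2 * C_D ^ 2 * m) ^ (α / Q) with hK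
  have hK0 : 0 ≤ K := Real.rpow_nonneg (by positivity) _
  have hAK : 0 ≤ A * K := mul_nonneg hA hK0
  have h4 : μ (ball z (2 * (2 * ρ))) ≤ ENNReal.ofReal (C_D ^ 2 * m) := by
    calc μ (ball z (2 * (2 * ρ))) ≤ ENNReal.ofReal C_D * μ (ball z (2 * ρ)) :=
          (hD z (2 * ρ) (by linarith)).2.1
      _ ≤ ENNReal.ofReal C_D * (ENNReal.ofReal C_D * μ (ball z ρ)) := by
          gcongr
          exact (hD z ρ hρ).2.1
      _ = ENNReal.ofReal (C_D ^ 2 * m) := by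
          rw [← ENNReal.ofReal_toReal (hD z ρ hρ).2.2.ne, ← hm, ← ENNReal.ofReal_mul hC0,
            ← ENNReal.ofReal_mul hC0]
          congr 1
          ring
  have hsub : ∀ u ∈ ball z ρ, ∀ r < 2 * ρ,
      μ (ball u r) ≤ ENNReal.ofReal (C_D ^ 2 * m) := by
    intro u hu r hr
    refine le_trans (measure_mono ?_) h4
    apply ball_subset_ball'
    have := mem_ball.1 hu
    linarith
  have key : ∀ y ∈ ball z ρ, a x - A * K ≤ a y := by
    intro y hy
    by_cases hxy : x = y
    · subst hxy; linarith
    have h1 := hHolder x y hxy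
    have hd : dist x y < 2 * ρ := by
      have h2 := dist_triangle_right x y z
      have := mem_ball.1 hx
      have := mem_ball.1 hy
      linarith
    have hs : (μ (ball x (dist x y)) + μ (ball y (dist x y))).toReal ≤ 2 * C_D ^ 2 * m := by
      apply ENNReal.toReal_le_of_le_ofReal (by positivity)
      calc _ ≤ ENNReal.ofReal (C_D ^ 2 * m) + ENNReal.ofReal (C_D ^ 2 * m) :=
            add_le_add (hsub x hx _ hd) (hsub y hy _ hd)
        _ = _ := by
            rw [← ENNReal.ofReal_add (by positivity) (by positivity)]
            congr 1
            ring
    have h3 : deltaDist μ Q x y ^ α ≤ K := by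
      rw [deltaDist, if_neg hxy, ← Real.rpow_mul ENNReal.toReal_nonneg,
        show 1 / Q * α = α / Q by ring]
      exact Real.rpow_le_rpow ENNReal.toReal_nonneg hs (div_nonneg hα0.le hQ0)
    have h5 := mul_le_mul_of_nonneg_left h3 hA
    have h6 := le_abs_self (a x - a y)
    linarith
  have hlow : a₀ ≤ a x := by
    rw [ha₀]
    refine csInf_le ⟨0, ?_⟩ ⟨x, hx, rfl⟩
    rintro _ ⟨y, _, rfl⟩
    exact ha y
  have hup : a x - A * K ≤ a₀ := by
    rw [ha₀]
    refine le_csInf ⟨_, x, hx, rfl⟩ ?_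
    rintro _ ⟨y, hy, rfl⟩
    exact key y hy
  refine ⟨hlow, ?_⟩
  nlinarith
end
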